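/- arXiv:1903.05011 — 2 statements merged into one kernel-verified Lean document; each statement's English description precedes it below -/
import Mathlib

section
/- Let m = (m₁,…,m_k) ∈ ℂ^k be such that for every nonempty subset S ⊆ {1,…,k} the sum Σ_{i∈S} mᵢ is nonzero. Then the polynomial ring ℂ[x₁,…,x_k] is a finitely generated module over the ℂ-subalgebra generated by all weighted power sums p_j(m;x) := m₁x₁ʲ + ⋯ + m_k x_kʲ for j ≥ 1. -/
/-!
The subalgebra `B` generated by the weighted power sums is generated by homogeneous polynomials of
positive degree, so by the graded Nakayama lemma it suffices that the polynomial ring is finite over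
the coefficient ring modulo the ideal these power sums generate. In that quotient the images `xᵢ` of
the variables satisfy `∑ mᵢ xᵢʲ = 0` for all `j ≥ 1`. Modulo any prime, linear independence of the
characters `j ↦ vʲ` then shows that the weights sum to zero over each fibre `{i | xᵢ = v}` with
`v ≠ 0`. As subset sums are units, all such fibres are empty, so each `xᵢ` lies in every prime, that
is, each `xᵢ` is nilpotent.
-/

open MvPolynomial

section GradedNakayama

variable {R A : Type*} [CommRing R] [CommRing A] [Algebra R A]
variable (𝒜 : ℕ → Submodule R A) [GradedAlgebra 𝒜] {B : Subalgebra R A} {s : Set A}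

lemma span_isHomogeneousElem_eq_top :
    Submodule.span R {a | SetLike.IsHomogeneousElem 𝒜 a} = ⊤ := by
  classical
  refine eq_top_iff.2 fun a _ ↦ ?_
  rw [← DirectSum.sum_support_decompose 𝒜 a]
  exact sum_mem fun n _ ↦ Submodule.subset_span (SetLike.isHomogeneousElem_coe _)

lemma span_subalgebra_eq_top_of_span_sup_ideal_span_eq_top (hsB : s ⊆ B)
    (hs : ∀ a ∈ s, ∃ n, 0 < n ∧ a ∈ 𝒜 n) {T : Set A}
    (hT : ∀ t ∈ T, SetLike.IsHomogeneousElem 𝒜 t)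
    (h : Submodule.span R T ⊔ (Ideal.span s).restrictScalars R = ⊤) :
    Submodule.span B T = ⊤ := by
  classical
  suffices hcomp : ∀ n a, (DirectSum.decompose 𝒜 a n : A) ∈ Submodule.span B T by
    refine eq_top_iff.2 fun a _ ↦ ?_
    rw [← DirectSum.sum_support_decompose 𝒜 a]
    exact sum_mem fun n _ ↦ hcomp n a
  intro n
  induction n using Nat.strong_induction_on with
  | _ n ih =>
  have component_of_span : ∀ t ∈ Submodule.span R T,
      (DirectSum.decompose 𝒜 t n : A) ∈ Submodule.span B T := by
    intro t ht
    induction ht using Submodule.span_induction with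
    | mem t ht =>
      obtain ⟨d, hd⟩ := hT t ht
      rw [DirectSum.decompose_of_mem 𝒜 hd, DirectSum.coe_of_apply]
      split_ifs
      exacts [Submodule.subset_span ht, zero_mem _]
    | zero => simp
    | add x y _ _ hx hy => simpa using add_mem hx hy
    | smul r x _ hx =>
      rw [DirectSum.decompose_smul]
      exact Submodule.smul_of_tower_mem _ r hx
  have component_of_ideal : ∀ g ∈ Ideal.span s,
      (DirectSum.decompose 𝒜 g n : A) ∈ Submodule.span B T := by
    intro g hg
    induction hg using Submodule.closure_induction with
    | zero => simp
    | add x y _ _ hx hy => simpa using add_mem hx hy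
    | smul_mem c b hb =>
      obtain ⟨d, d_pos, hd⟩ := hs b hb
      rw [smul_eq_mul, mul_comm, DirectSum.coe_decompose_mul_of_left_mem 𝒜 n hd]
      split_ifs
      · exact Submodule.smul_mem _ (⟨b, hsB hb⟩ : B) (ih (n - d) (by lia) c)
      · exact zero_mem _
  intro a
  obtain ⟨t, ht, g, hg, rfl⟩ := Submodule.mem_sup.1 (h ▸ Submodule.mem_top : a ∈ _)
  simpa using add_mem (component_of_span t ht) (component_of_ideal g hg)

theorem finite_subalgebra_of_finite_quotient_span (hsB : s ⊆ B)
    (hs : ∀ a ∈ s, ∃ n, 0 < n ∧ a ∈ 𝒜 n) [Module.Finite R (A ⧸ Ideal.span s)] :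
    Module.Finite B A := by
  classical
  let π : A →ₗ[R] A ⧸ Ideal.span s := (Ideal.Quotient.mkₐ R (Ideal.span s)).toLinearMap
  have π_surjective : Function.Surjective π := Ideal.Quotient.mk_surjective
  have span_image : Submodule.span R (π '' {a | SetLike.IsHomogeneousElem 𝒜 a}) = ⊤ := by
    rw [Submodule.span_image, span_isHomogeneousElem_eq_top, Submodule.map_top,
      LinearMap.range_eq_top.2 π_surjective]
  obtain ⟨T', hT', span_T'⟩ := (Submodule.fg_span_iff_fg_span_finset_subset _).1
    (span_image ▸ Module.Finite.fg_top)
  obtain ⟨T, hT, rfl⟩ := Finset.subset_set_image_iff.1 hT'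
  have span_T : Submodule.span R (T : Set A) ⊔ (Ideal.span s).restrictScalars R = ⊤ := by
    have ker_π : LinearMap.ker π = (Ideal.span s).restrictScalars R := by
      ext a
      exact Ideal.Quotient.eq_zero_iff_mem
    rw [← ker_π, ← Submodule.comap_map_eq, ← Submodule.span_image, ← Finset.coe_image, ← span_T',
      span_image, Submodule.comap_top]
  exact ⟨T, span_subalgebra_eq_top_of_span_sup_ideal_span_eq_top 𝒜 hsB hs hT span_T⟩

end GradedNakayama

section VanishingPowerSums

variable {ι R : Type*} [Fintype ι] [CommRing R] {a x : ι → R}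

lemma linearIndependent_fun_pow (R : Type*) [CommRing R] [IsDomain R] :
    LinearIndependent R (fun v n ↦ v ^ n : R → ℕ → R) :=
  (linearIndependent_monoidHom (Multiplicative ℕ) R).comp (powersHom R) (powersHom R).injective

lemma sum_fiber_eq_zero_of_sum_mul_pow_eq_zero [IsDomain R] [DecidableEq R]
    (h : ∀ j, 1 ≤ j → ∑ i, a i * x i ^ j = 0) {v : R} (hv : v ≠ 0) :
    ∑ i with x i = v, a i = 0 := by
  let c : R →₀ R := ∑ i, Finsupp.single (x i) (a i * x i)
  have c_apply : c v = (∑ i with x i = v, a i) * v := by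
    simp only [c, Finsupp.finsetSum_apply, Finsupp.single_apply, Finset.sum_mul, Finset.sum_filter]
    grind
  have combination_eq_zero : Finsupp.linearCombination R (fun v n ↦ v ^ n : R → ℕ → R) c = 0 := by
    ext n
    simpa [c, -Finsupp.single_mul, mul_assoc, ← pow_succ'] using h (n + 1) (by lia)
  have c_eq_zero := linearIndependent_iff.1 (linearIndependent_fun_pow R) c combination_eq_zero
  exact (mul_eq_zero.1 (c_apply ▸ DFunLike.congr_fun c_eq_zero v)).resolve_right hv

lemma isNilpotent_of_sum_mul_pow_eq_zero
    (ha : ∀ S : Finset ι, S.Nonempty → IsUnit (∑ i ∈ S, a i))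
    (h : ∀ j, 1 ≤ j → ∑ i, a i * x i ^ j = 0) (i : ι) : IsNilpotent (x i) := by
  classical
  refine nilpotent_iff_mem_prime.2 fun P hP ↦ ?_
  by_contra hi
  let π := Ideal.Quotient.mk P
  have hπ : ∀ j, 1 ≤ j → ∑ i, π (a i) * π (x i) ^ j = 0 := fun j hj ↦ by
    simpa using congrArg π (h j hj)
  have sum_fiber := sum_fiber_eq_zero_of_sum_mul_pow_eq_zero hπ
    (mt Ideal.Quotient.eq_zero_iff_mem.1 hi)
  rw [← map_sum] at sum_fiber
  exact ((ha _ ⟨i, by simp [π]⟩).map π).ne_zero sum_fiber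

end VanishingPowerSums

section NilpotentGenerators

variable {R A : Type*} [CommRing R] [CommRing A] [Algebra R A]

lemma finite_of_adjoin_eq_top_of_isNilpotent {t : Set A} (ht : t.Finite)
    (h_top : Algebra.adjoin R t = ⊤) (h : ∀ a ∈ t, IsNilpotent a) : Module.Finite R A := by
  have h_integral : ∀ a ∈ t, IsIntegral R a := fun a ha ↦ by
    obtain ⟨n, hn⟩ := h a ha
    exact ⟨.X ^ n, Polynomial.monic_X_pow n, by simp [hn]⟩
  exact ⟨by simpa [h_top] using fg_adjoin_of_finite ht h_integral⟩

lemma finite_quotient_of_isNilpotent_X {ι : Type*} [Finite ι] (I : Ideal (MvPolynomial ι R))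
    (h : ∀ i, IsNilpotent (Ideal.Quotient.mk I (X i))) :
    Module.Finite R (MvPolynomial ι R ⧸ I) := by
  have adjoin_eq_top : Algebra.adjoin R (Ideal.Quotient.mkₐ R I '' Set.range X) = ⊤ := by
    rw [← AlgHom.map_adjoin, adjoin_range_X, Algebra.map_top, AlgHom.range_eq_top]
    exact Ideal.Quotient.mkₐ_surjective R I
  refine finite_of_adjoin_eq_top_of_isNilpotent ((Set.finite_range X).image _) adjoin_eq_top ?_
  rintro _ ⟨_, ⟨i, rfl⟩, rfl⟩
  exact h i

end NilpotentGenerators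

section WeightedPowerSums

variable {ι R : Type*} [Fintype ι] [CommRing R]

/-- The weighted power sum `p_j(m; x) = ∑ i, mᵢ xᵢʲ`, generalising `MvPolynomial.psum`. -/
noncomputable def weightedPsum (m : ι → R) (j : ℕ) : MvPolynomial ι R :=
  ∑ i, C (m i) * X i ^ j

lemma weightedPsum_isHomogeneous (m : ι → R) (j : ℕ) : (weightedPsum m j).IsHomogeneous j :=
  .sum _ _ _ fun i _ ↦ isHomogeneous_C_mul_X_pow (m i) i j

lemma isNilpotent_mk_X_of_weightedPsum_mem {m : ι → R}
    (hm : ∀ S : Finset ι, S.Nonempty → IsUnit (∑ i ∈ S, m i)) {I : Ideal (MvPolynomial ι R)}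
    (hI : ∀ j, 1 ≤ j → weightedPsum m j ∈ I) (i : ι) :
    IsNilpotent (Ideal.Quotient.mk I (X i)) := by
  refine isNilpotent_of_sum_mul_pow_eq_zero (a := fun i ↦ Ideal.Quotient.mk I (C (m i)))
    (x := fun i ↦ Ideal.Quotient.mk I (X i)) (fun S hS ↦ ?_) (fun j hj ↦ ?_) i
  · simpa using (hm S hS).map ((Ideal.Quotient.mk I).comp C)
  · simpa [weightedPsum] using Ideal.Quotient.eq_zero_iff_mem.2 (hI j hj)

theorem stmt_3_general (m : ι → R)
    (hm : ∀ S : Finset ι, S.Nonempty → IsUnit (∑ i ∈ S, m i)) :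
    Module.Finite (Algebra.adjoin R {f | ∃ j, 1 ≤ j ∧ f = weightedPsum m j})
      (MvPolynomial ι R) := by
  let := gradedAlgebra (σ := ι) (R := R)
  have := finite_quotient_of_isNilpotent_X _ <| isNilpotent_mk_X_of_weightedPsum_mem hm
    fun j hj ↦ Ideal.subset_span (s := {f | ∃ j, 1 ≤ j ∧ f = weightedPsum m j}) ⟨j, hj, rfl⟩
  refine finite_subalgebra_of_finite_quotient_span (homogeneousSubmodule ι R)
    Algebra.subset_adjoin ?_
  rintro _ ⟨j, hj, rfl⟩
  exact ⟨j, hj, weightedPsum_isHomogeneous m j⟩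

end WeightedPowerSums

/-- Let `m = (m₁,…,m_k) ∈ ℂ^k` with no nonempty subset of the weights
summing to zero.  Then `ℂ[x₁,…,x_k]` is a finitely generated module over the `ℂ`-subalgebra
generated by all weighted power sums `p_j(m;x) = m₁x₁ʲ + ⋯ + m_k x_kʲ`, `j ≥ 1`. -/
theorem stmt_3 (k : ℕ) (m : Fin k → ℂ)
    (hm : ∀ S : Finset (Fin k), S.Nonempty → ∑ i ∈ S, m i ≠ 0) :
    Module.Finite
      (Algebra.adjoin ℂ
        {f : MvPolynomial (Fin k) ℂ |
          ∃ j : ℕ, 1 ≤ j ∧ f = ∑ i : Fin k, C (m i) * X i ^ j})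
      (MvPolynomial (Fin k) ℂ) :=
  stmt_3_general m fun S hS ↦ (hm S hS).isUnit
end

section
/- In the polynomial ring ℂ[m₁,m₂,x₁,x₂], setting p_j := m₁x₁ʲ + m₂x₂ʲ, one has the identity m₁m₂·((m₁+m₂)p₄ − 4p₁p₃ + 3p₂²) = ((m₁+m₂)p₂ − p₁²)². Consequently, for any fixed complex weights m₁, m₂ with m₁, m₂ and m₁+m₂ all nonzero, the weighted power sum p₄ lies in the ℂ-subalgebra of ℂ[x₁,x₂] generated by p₁, p₂, p₃. -/
open MvPolynomial

/-- The weighted power sum `p_j = m₁x₁ʲ + m₂x₂ʲ` in `ℂ[m₁,m₂,x₁,x₂]`, where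
`m_i = X (Sum.inl i)` and `x_i = X (Sum.inr i)`. -/
noncomputable def P7 (j : ℕ) : MvPolynomial (Fin 2 ⊕ Fin 2) ℂ :=
  X (Sum.inl 0) * X (Sum.inr 0) ^ j + X (Sum.inl 1) * X (Sum.inr 1) ^ j

/-- The weighted power sum `p_j(m;x) = m₁x₁ʲ + m₂x₂ʲ ∈ ℂ[x₁,x₂]` for fixed weights. -/
noncomputable def q7 (m₁ m₂ : ℂ) (j : ℕ) : MvPolynomial (Fin 2) ℂ :=
  C m₁ * X 0 ^ j + C m₂ * X 1 ^ j

/-!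
Expanding `½ ∑ᵢⱼ mᵢ mⱼ (xᵢ - xⱼ)ᵏ` binomially yields `p₀ p₂ - p₁²` for `k = 2` and
`p₀ p₄ - 4 p₁ p₃ + 3 p₂²` for `k = 4`, where `p₀ = m₁ + m₂`. With only two points both sums reduce
to `m₁ m₂ (x₁ - x₂)ᵏ`, and eliminating `x₁ - x₂` gives a relation among `p₁, …, p₄` that is linear
in `p₄` with coefficient `m₁ m₂ (m₁ + m₂)`; it can be solved for `p₄` once this coefficient is a
unit.
-/

/-- The weighted power sum `p_j(m; x) = m₁x₁ʲ + m₂x₂ʲ` of two elements `x₁, x₂` of an `R`-algebra.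
The weights act by scalar multiplication, so that taking `R = A` covers weights that are themselves
elements of the algebra, such as polynomial variables. -/
def weightedPowerSum {R A : Type*} [CommSemiring R] [Semiring A] [Algebra R A]
    (m₁ m₂ : R) (x₁ x₂ : A) (j : ℕ) : A :=
  m₁ • x₁ ^ j + m₂ • x₂ ^ j

namespace weightedPowerSum

variable {R A : Type*} [CommRing R] [CommRing A] [Algebra R A] (m₁ m₂ : R) (x₁ x₂ : A)

local notation "p" => weightedPowerSum m₁ m₂ x₁ x₂

theorem quadratic_eq_smul_sub_sq :
    (m₁ + m₂) • p 2 - p 1 ^ 2 = (m₁ * m₂) • (x₁ - x₂) ^ 2 := by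
  simp only [weightedPowerSum, Algebra.smul_def, map_add, map_mul]
  ring

theorem quartic_eq_smul_sub_pow_four :
    (m₁ + m₂) • p 4 - 4 * p 1 * p 3 + 3 * p 2 ^ 2 = (m₁ * m₂) • (x₁ - x₂) ^ 4 := by
  simp only [weightedPowerSum, Algebra.smul_def, map_add, map_mul]
  ring

theorem mul_smul_quartic_eq_quadratic_sq :
    (m₁ * m₂) • ((m₁ + m₂) • p 4 - 4 * p 1 * p 3 + 3 * p 2 ^ 2) =
      ((m₁ + m₂) • p 2 - p 1 ^ 2) ^ 2 := by
  rw [quadratic_eq_smul_sub_sq, quartic_eq_smul_sub_pow_four, smul_pow, smul_smul, ← pow_two,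
    ← pow_mul]

variable {m₁ m₂ x₁ x₂} in
theorem four_mem_of_isUnit (hmul : IsUnit (m₁ * m₂)) (hadd : IsUnit (m₁ + m₂))
    {S : Subalgebra R A} (h₁ : p 1 ∈ S) (h₂ : p 2 ∈ S) (h₃ : p 3 ∈ S) : p 4 ∈ S := by
  have quartic_mem : (m₁ + m₂) • p 4 - 4 * p 1 * p 3 + 3 * p 2 ^ 2 ∈ S := by
    rw [← Subalgebra.mem_toSubmodule, ← Submodule.smul_mem_iff_of_isUnit _ hmul,
      mul_smul_quartic_eq_quadratic_sq]
    exact pow_mem (sub_mem (S.smul_mem h₂ _) (pow_mem h₁ 2)) 2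
  have lower_mem : 4 * p 1 * p 3 - 3 * p 2 ^ 2 ∈ S :=
    sub_mem (mul_mem (mul_mem (ofNat_mem S 4) h₁) h₃) (mul_mem (ofNat_mem S 3) (pow_mem h₂ 2))
  have smul_four_mem : (m₁ + m₂) • p 4 ∈ S := by
    convert add_mem quartic_mem lower_mem using 1
    ring
  exact (Submodule.smul_mem_iff_of_isUnit (Subalgebra.toSubmodule S) hadd).mp smul_four_mem

end weightedPowerSum

theorem P7_eq_weightedPowerSum :
    P7 = weightedPowerSum (R := MvPolynomial (Fin 2 ⊕ Fin 2) ℂ)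
      (X (Sum.inl 0)) (X (Sum.inl 1)) (X (Sum.inr 0)) (X (Sum.inr 1)) :=
  rfl

theorem q7_eq_weightedPowerSum (m₁ m₂ : ℂ) : q7 m₁ m₂ = weightedPowerSum m₁ m₂ (X 0) (X 1) := by
  funext j
  simp only [q7, weightedPowerSum, smul_eq_C_mul]

theorem stmt_7_general {R A : Type*} [CommRing R] [CommRing A] [Algebra R A]
    (m₁ m₂ : R) (x₁ x₂ : A) :
    let p := weightedPowerSum m₁ m₂ x₁ x₂
    ((m₁ * m₂) • ((m₁ + m₂) • p 4 - 4 * p 1 * p 3 + 3 * p 2 ^ 2) =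
        ((m₁ + m₂) • p 2 - p 1 ^ 2) ^ 2) ∧
      (IsUnit (m₁ * m₂) → IsUnit (m₁ + m₂) → p 4 ∈ Algebra.adjoin R {p 1, p 2, p 3}) :=
  ⟨weightedPowerSum.mul_smul_quartic_eq_quadratic_sq m₁ m₂ x₁ x₂, fun hmul hadd ↦
    weightedPowerSum.four_mem_of_isUnit hmul hadd (Algebra.subset_adjoin (by simp))
      (Algebra.subset_adjoin (by simp)) (Algebra.subset_adjoin (by simp))⟩

/-- In `ℂ[m₁,m₂,x₁,x₂]` one has
`m₁m₂·((m₁+m₂)p₄ − 4p₁p₃ + 3p₂²) = ((m₁+m₂)p₂ − p₁²)²`; consequently, for fixed complex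
weights `m₁, m₂` with `m₁, m₂, m₁+m₂` nonzero, `p₄` lies in the `ℂ`-subalgebra of
`ℂ[x₁,x₂]` generated by `p₁, p₂, p₃`. -/
theorem stmt_7 :
    (X (Sum.inl 0) * X (Sum.inl 1) *
        ((X (Sum.inl 0) + X (Sum.inl 1)) * P7 4 - 4 * P7 1 * P7 3 + 3 * P7 2 ^ 2)
      = ((X (Sum.inl 0) + X (Sum.inl 1)) * P7 2 - P7 1 ^ 2) ^ 2) ∧
    (∀ m₁ m₂ : ℂ, m₁ ≠ 0 → m₂ ≠ 0 → m₁ + m₂ ≠ 0 →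
      q7 m₁ m₂ 4 ∈ Algebra.adjoin ℂ {q7 m₁ m₂ 1, q7 m₁ m₂ 2, q7 m₁ m₂ 3}) := by
  simp only [P7_eq_weightedPowerSum, q7_eq_weightedPowerSum, ← smul_eq_mul (X _ * X _),
    ← smul_eq_mul (X _ + X _)]
  exact ⟨(stmt_7_general _ _ _ _).1, fun m₁ m₂ h₁ h₂ hadd ↦
    (stmt_7_general m₁ m₂ _ _).2 (mul_ne_zero h₁ h₂).isUnit hadd.isUnit⟩
end
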